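/- Let w : {1,…,n} → ℝ with w(j) > 0 for all j be a welfare basis function and f : {1,…,n} → ℝ with f(1) > 0; set f(0) = w(0) = f(n+1) = w(n+1) = 0. If f(j) is non-increasing in j on {1,…,n}, then PoA(f,w,n) = 1/W*, where W* is the minimum of μ over λ ≥ 0 and μ ∈ ℝ subject to: μ·w(j) ≥ w(l) + λ·[j·f(j) − l·f(j+1)] for all j,l ∈ {0,…,n} with 1 ≤ j+l ≤ n, and μ·w(j) ≥ w(l) + λ·[(n−l)·f(j) − (n−j)·f(j+1)] for all j,l ∈ {0,…,n} with j+l > n. -/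

import Mathlib

/-!
The proof is linear programming duality for smoothness inequalities.

For a resource used by `j` agents at an equilibrium, by `l` agents at another allocation, and by
`x` agents at both, the two allocations contribute `w j` and `w l` to the welfares, and summing the
equilibrium inequalities over the agents contributes `(j - x) f(j) - (l - x) f(j+1)`. For
non-increasing `f` this is largest at the least possible overlap `x = max 0 (j + l - n)`, where it
is the coefficient `lamCoeff` of `λ` in the reduced program (`reducedFeasible_iff`,
`overlap_le_lamCoeff`). Hence a feasible `(λ, μ)` gives `W(o) ≤ μ W(a)` for every equilibrium `a`
(`RAGame.welfare_le_of_feasible`). Equilibria exist by Rosenthal's potential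
(`RAGame.exists_isNash`), so the infimum defining the worst equilibrium is never over the empty
set, and the price of anarchy is at least `1/W*`.

Conversely, if `μ` is infeasible, Farkas' lemma in the single variable `λ` (`farkas_one`) gives
nonnegative weights on two constraints that certify this. Placing resources with these weights
around a circle of `n` agents (`cyclicGame`) gives a game in which all agents face the same
deviation; the first inequality of the certificate says that `cyclicEq` is an equilibrium and the
second that its welfare is less than `1/μ` times that of `cyclicOpt` (`exists_bad_game`). Letting
`μ` increase to `W*` shows that the price of anarchy is at most `1/W*`.

The minimum is attained because the pair `(1, 0)` bounds `λ` by a multiple of `μ`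
(`exists_minimizer`).
-/

/-- A resource allocation game with at most `n` agents: a finite resource set `R`,
a nonnegative value `v r` for each resource, `m ≤ n` agents, and for each agent a
nonempty finite collection of admissible choices (subsets of `R`). -/
structure RAGame (n : ℕ) where
  R : Type
  [fintypeR : Fintype R]
  [decEqR : DecidableEq R]
  v : R → ℝ
  v_nonneg : ∀ r, 0 ≤ v r
  m : ℕ
  m_le : m ≤ n
  A : Fin m → Finset (Finset R)
  A_ne : ∀ i, (A i).Nonempty

attribute [instance] RAGame.fintypeR RAGame.decEqR

namespace RAGame

variable {n : ℕ}

/-- An allocation: each agent selects an admissible choice. -/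
def Alloc (G : RAGame n) : Type := (i : Fin G.m) → {s : Finset G.R // s ∈ G.A i}

/-- `|a|_r`: the number of agents selecting resource `r` in allocation `a`. -/
def count (G : RAGame n) (a : G.Alloc) (r : G.R) : ℕ :=
  (Finset.univ.filter fun i => r ∈ (a i).val).card

/-- The welfare `W(a) = Σ_{r covered} v_r · w(|a|_r)`. -/
def welfare (G : RAGame n) (w : ℕ → ℝ) (a : G.Alloc) : ℝ :=
  ∑ r ∈ Finset.univ.filter (fun r => 0 < G.count a r), G.v r * w (G.count a r)

/-- Agent `i`'s utility `U_i(a) = Σ_{r ∈ a_i} v_r · f(|a|_r)`. -/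
def utility (G : RAGame n) (f : ℕ → ℝ) (a : G.Alloc) (i : Fin G.m) : ℝ :=
  ∑ r ∈ (a i).val, G.v r * f (G.count a r)

/-- Pure Nash equilibrium: no unilateral deviation improves an agent's utility. -/
def IsNash (G : RAGame n) (f : ℕ → ℝ) (a : G.Alloc) : Prop :=
  ∀ (i : Fin G.m) (s : {s : Finset G.R // s ∈ G.A i}),
    G.utility f (Function.update a i s) i ≤ G.utility f a i

/-- The optimal welfare `max_{a ∈ A} W(a)`. -/
noncomputable def optVal (G : RAGame n) (w : ℕ → ℝ) : ℝ :=
  sSup { x : ℝ | ∃ a : G.Alloc, x = G.welfare w a }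

/-- The worst equilibrium welfare `min_{a ∈ NE(G)} W(a)`. -/
noncomputable def worstNash (G : RAGame n) (f w : ℕ → ℝ) : ℝ :=
  sInf { x : ℝ | ∃ a : G.Alloc, G.IsNash f a ∧ x = G.welfare w a }

end RAGame

/-- The price of anarchy `PoA(f,w,n)` over the class `G_{f,w}^n` of games with at
most `n` agents and strictly positive optimal welfare. -/
noncomputable def PoA (f w : ℕ → ℝ) (n : ℕ) : ℝ :=
  sInf { x : ℝ | ∃ G : RAGame n, 0 < G.optVal w ∧ x = G.worstNash f w / G.optVal w }

/-- Feasibility for the reduced dual linear program (8) (case of non-increasing `f`):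
`λ ≥ 0`, `μ w(j) ≥ w(l) + λ[j f(j) − l f(j+1)]` for `j,l ∈ [0,n]`, `1 ≤ j+l ≤ n`, and
`μ w(j) ≥ w(l) + λ[(n−l) f(j) − (n−j) f(j+1)]` for `j,l ∈ [0,n]`, `j+l > n`. -/
def ReducedFeasible (f w : ℕ → ℝ) (n : ℕ) (lam mu : ℝ) : Prop :=
  0 ≤ lam ∧
  (∀ j l : ℕ, j ≤ n → l ≤ n → 1 ≤ j + l → j + l ≤ n →
      w l + lam * ((j : ℝ) * f j - (l : ℝ) * f (j + 1)) ≤ mu * w j) ∧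
  (∀ j l : ℕ, j ≤ n → l ≤ n → n < j + l →
      w l + lam * (((n : ℝ) - (l : ℝ)) * f j - ((n : ℝ) - (j : ℝ)) * f (j + 1)) ≤ mu * w j)

/-! ### Counting and utilities under unilateral deviations -/

namespace RAGame

variable {n : ℕ}

noncomputable instance (G : RAGame n) : Fintype G.Alloc := by
  unfold Alloc; infer_instance

instance (G : RAGame n) : Nonempty G.Alloc :=
  ⟨fun i => ⟨(G.A_ne i).choose, (G.A_ne i).choose_spec⟩⟩

/-- The allocation `a` after agent `i` switches to the choice `s`. This is `Function.update`, typed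
as an allocation so that lemmas about allocations can rewrite with it. -/
def deviate (G : RAGame n) (a : G.Alloc) (i : Fin G.m) (s : {s : Finset G.R // s ∈ G.A i}) :
    G.Alloc :=
  Function.update a i s

lemma deviate_self (G : RAGame n) (a : G.Alloc) (i : Fin G.m)
    (s : {s : Finset G.R // s ∈ G.A i}) : G.deviate a i s i = s :=
  Function.update_self _ _ _

lemma deviate_of_ne (G : RAGame n) (a : G.Alloc) {i k : Fin G.m}
    (s : {s : Finset G.R // s ∈ G.A i}) (hk : k ≠ i) : G.deviate a i s k = a k :=
  Function.update_of_ne hk _ _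

lemma deviate_eq_self (G : RAGame n) (a : G.Alloc) (i : Fin G.m) : G.deviate a i (a i) = a :=
  Function.update_eq_self _ _

lemma isNash_iff (G : RAGame n) (f : ℕ → ℝ) (a : G.Alloc) :
    G.IsNash f a ↔ ∀ (i : Fin G.m) (s : {s : Finset G.R // s ∈ G.A i}),
      G.utility f (G.deviate a i s) i ≤ G.utility f a i :=
  Iff.rfl

/-- The number of agents other than `i` selecting resource `r`. -/
def others (G : RAGame n) (a : G.Alloc) (i : Fin G.m) (r : G.R) : ℕ :=
  (Finset.univ.filter fun k => k ≠ i ∧ r ∈ (a k).val).card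

lemma count_eq_others (G : RAGame n) (a : G.Alloc) (i : Fin G.m) (r : G.R) :
    G.count a r = G.others a i r + if r ∈ (a i).val then 1 else 0 := by
  unfold count others
  simp only [Finset.card_filter]
  rw [← Finset.add_sum_erase _ _ (Finset.mem_univ i),
    ← Finset.add_sum_erase (a := i) _ (fun k => if k ≠ i ∧ r ∈ (a k).val then 1 else 0)
      (Finset.mem_univ i)]
  have : ∑ x ∈ Finset.univ.erase i, (if r ∈ (a x).val then 1 else 0) =
      ∑ x ∈ Finset.univ.erase i, (if x ≠ i ∧ r ∈ (a x).val then 1 else 0) := by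
    refine Finset.sum_congr rfl fun x hx => ?_
    simp [Finset.ne_of_mem_erase hx]
  rw [this]
  simp
  ring

lemma others_update (G : RAGame n) (a : G.Alloc) (i : Fin G.m)
    (s : {s : Finset G.R // s ∈ G.A i}) (r : G.R) :
    G.others (G.deviate a i s) i r = G.others a i r := by
  unfold others
  congr 1
  ext k
  simp only [Finset.mem_filter, Finset.mem_univ, true_and]
  refine and_congr_right fun hk => ?_
  rw [deviate_of_ne _ _ _ hk]

lemma utility_eq_sum (G : RAGame n) (f : ℕ → ℝ) (a : G.Alloc) (i : Fin G.m) :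
    G.utility f a i = ∑ r, G.v r * (if r ∈ (a i).val then f (G.count a r) else 0) := by
  simp [utility, mul_ite]

/-- The utility of a deviating agent, in terms of the counts before the deviation: a resource the
agent joins gains a user, a resource the agent keeps does not. -/
lemma utility_update (G : RAGame n) (f : ℕ → ℝ) (a : G.Alloc) (i : Fin G.m)
    (s : {s : Finset G.R // s ∈ G.A i}) :
    G.utility f (G.deviate a i s) i = ∑ r, G.v r * (if r ∈ s.val then
      (if r ∈ (a i).val then f (G.count a r) else f (G.count a r + 1)) else 0) := by
  rw [utility_eq_sum]
  refine Finset.sum_congr rfl fun r _ => ?_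
  rw [G.count_eq_others _ i r, G.count_eq_others a i r, others_update, deviate_self]
  split_ifs <;> simp_all

lemma welfare_eq_sum (G : RAGame n) {w : ℕ → ℝ} (hw0 : w 0 = 0) (a : G.Alloc) :
    G.welfare w a = ∑ r, G.v r * w (G.count a r) := by
  unfold welfare
  refine Finset.sum_subset (Finset.filter_subset _ _) fun r _ hr => ?_
  have : G.count a r = 0 := by simpa using hr
  rw [this, hw0, mul_zero]

lemma count_le (G : RAGame n) (a : G.Alloc) (r : G.R) : G.count a r ≤ n := by
  refine le_trans (Finset.card_le_univ _) ?_
  simpa using G.m_le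

lemma finite_welfare (G : RAGame n) (w : ℕ → ℝ) :
    {x : ℝ | ∃ a : G.Alloc, x = G.welfare w a}.Finite :=
  (Set.finite_range (G.welfare w)).subset (by rintro _ ⟨a, rfl⟩; exact ⟨a, rfl⟩)

lemma le_optVal (G : RAGame n) (w : ℕ → ℝ) (a : G.Alloc) : G.welfare w a ≤ G.optVal w :=
  le_csSup (G.finite_welfare w).bddAbove ⟨a, rfl⟩

lemma worstNash_le (G : RAGame n) (f w : ℕ → ℝ) {a : G.Alloc} (ha : G.IsNash f a) :
    G.worstNash f w ≤ G.welfare w a :=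
  csInf_le ((G.finite_welfare w).subset (by rintro _ ⟨a, _, rfl⟩; exact ⟨a, rfl⟩)).bddBelow
    ⟨a, ha, rfl⟩

/-! ### Existence of equilibria -/

/-- Rosenthal's potential `Σ_r v_r (f(1) + ⋯ + f(|a|_r))`. -/
noncomputable def potential (G : RAGame n) (f : ℕ → ℝ) (a : G.Alloc) : ℝ :=
  ∑ r, G.v r * ∑ k ∈ Finset.range (G.count a r), f (k + 1)

/-- The potential is the utility of agent `i` plus a term independent of that agent's choice. -/
lemma potential_eq (G : RAGame n) (f : ℕ → ℝ) (a : G.Alloc) (i : Fin G.m) :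
    G.potential f a = ∑ r, G.v r * ∑ k ∈ Finset.range (G.others a i r), f (k + 1)
      + G.utility f a i := by
  rw [utility_eq_sum, ← Finset.sum_add_distrib]
  refine Finset.sum_congr rfl fun r _ => ?_
  rw [← mul_add, G.count_eq_others a i r]
  split_ifs
  · rw [Finset.sum_range_succ]
  · simp

/-- A maximizer of the potential is an equilibrium. -/
lemma exists_isNash (G : RAGame n) (f : ℕ → ℝ) : ∃ a : G.Alloc, G.IsNash f a := by
  obtain ⟨a, ha⟩ := Finite.exists_max (G.potential f)
  refine ⟨a, (G.isNash_iff f a).2 fun i s => ?_⟩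
  have h := ha (G.deviate a i s)
  rw [G.potential_eq f _ i, G.potential_eq f a i] at h
  simp only [others_update] at h
  linarith

end RAGame

/-! ### The reduced program in uniform form -/

/-- The coefficient of `λ` in the constraint of the pair `(j, l)`: with the least possible
overlap `x = max 0 (j + l - n)` of the two sets of agents, it is `(j - x) f(j) - (l - x) f(j+1)`.
The subtraction `j + l - n` is truncated, which is the `max`. -/
def lamCoeff (f : ℕ → ℝ) (n j l : ℕ) : ℝ :=
  ((j : ℝ) - ((j + l - n : ℕ) : ℝ)) * f j - ((l : ℝ) - ((j + l - n : ℕ) : ℝ)) * f (j + 1)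

lemma reducedFeasible_iff {n : ℕ} {w f : ℕ → ℝ} (hw0 : w 0 = 0) (lam mu : ℝ) :
    ReducedFeasible f w n lam mu ↔ 0 ≤ lam ∧
      ∀ j l : ℕ, j ≤ n → l ≤ n → (w l - mu * w j) + lam * lamCoeff f n j l ≤ 0 := by
  unfold ReducedFeasible lamCoeff
  refine and_congr_right fun _ => ⟨fun ⟨h1, h2⟩ j l hj hl => ?_, fun h => ⟨?_, ?_⟩⟩
  · rcases Nat.lt_or_ge n (j + l) with hlt | hge
    · have := h2 j l hj hl hlt
      rw [Nat.cast_sub hlt.le]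
      push_cast
      ring_nf at this ⊢
      linarith
    · rw [Nat.sub_eq_zero_of_le hge]
      rcases Nat.eq_zero_or_pos (j + l) with h0 | hpos
      · obtain ⟨rfl, rfl⟩ : j = 0 ∧ l = 0 := by omega
        simp [hw0]
      · have := h1 j l hj hl hpos hge
        simp only [Nat.cast_zero, sub_zero]
        linarith
  · intro j l hj hl _ hge
    have := h j l hj hl
    rw [Nat.sub_eq_zero_of_le hge] at this
    simp only [Nat.cast_zero, sub_zero] at this
    linarith
  · intro j l hj hl hlt
    have := h j l hj hl
    rw [Nat.cast_sub hlt.le] at this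
    push_cast at this
    ring_nf at this ⊢
    linarith

/-- For non-increasing `f`, the constraint with an arbitrary overlap `x` follows from the one with
the least overlap: the coefficient of `λ` decreases as `x` grows. -/
lemma overlap_le_lamCoeff {n : ℕ} {f : ℕ → ℝ}
    (hmono : ∀ j, 1 ≤ j → j + 1 ≤ n → f (j + 1) ≤ f j) {j l x : ℕ} (hj : j ≤ n)
    (hxj : x ≤ j) (hxl : x ≤ l) (hx : j + l ≤ n + x) :
    ((j : ℝ) - x) * f j - ((l : ℝ) - x) * f (j + 1) ≤ lamCoeff f n j l := by
  unfold lamCoeff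
  have hx0 : j + l - n ≤ x := by omega
  have hx0' : ((j + l - n : ℕ) : ℝ) ≤ x := by exact_mod_cast hx0
  by_cases h : 1 ≤ j ∧ j + 1 ≤ n
  · nlinarith [mul_nonneg (sub_nonneg.2 hx0') (sub_nonneg.2 (hmono j h.1 h.2))]
  · -- For `j = 0` or `j = n` the overlap is forced.
    have : j + l - n = x := by omega
    rw [this]

/-! ### Equilibrium welfare from feasible points -/

/-- The smoothness bound: `μ` times the welfare of an equilibrium dominates the welfare of any
allocation, since the constraints hold resource by resource. -/
lemma RAGame.welfare_le_of_feasible {n : ℕ} {w f : ℕ → ℝ} (hw0 : w 0 = 0)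
    (hmono : ∀ j, 1 ≤ j → j + 1 ≤ n → f (j + 1) ≤ f j) {lam mu : ℝ}
    (h : ReducedFeasible f w n lam mu) (G : RAGame n) {a : G.Alloc} (ha : G.IsNash f a)
    (o : G.Alloc) : G.welfare w o ≤ mu * G.welfare w a := by
  rw [reducedFeasible_iff hw0] at h
  obtain ⟨hlam, h⟩ := h
  set x : G.R → ℕ := fun r =>
    (Finset.univ.filter fun i => r ∈ (a i).val ∧ r ∈ (o i).val).card with hxdef
  have hxa : ∀ r, x r ≤ G.count a r := fun r =>
    Finset.card_le_card (Finset.monotone_filter_right _ fun i _ hi => hi.1)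
  have hxo : ∀ r, x r ≤ G.count o r := fun r =>
    Finset.card_le_card (Finset.monotone_filter_right _ fun i _ hi => hi.2)
  have hsum : ∀ r, G.count a r + G.count o r ≤ n + x r := by
    intro r
    have h1 := Finset.card_union_add_card_inter
      (Finset.univ.filter fun i => r ∈ (a i).val) (Finset.univ.filter fun i => r ∈ (o i).val)
    rw [← Finset.filter_and] at h1
    have h2 := (Finset.card_le_univ ((Finset.univ.filter fun i => r ∈ (a i).val) ∪
      (Finset.univ.filter fun i => r ∈ (o i).val))).trans_eq (Fintype.card_fin G.m)
    have h3 := G.m_le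
    simp only [RAGame.count, hxdef]
    omega
  -- Summing the equilibrium inequalities over all agents, resource by resource.
  have hU : ∑ i, G.utility f a i = ∑ r, G.v r * (G.count a r * f (G.count a r)) := by
    simp only [RAGame.utility_eq_sum]
    rw [Finset.sum_comm]
    refine Finset.sum_congr rfl fun r _ => ?_
    rw [← Finset.mul_sum, ← Finset.sum_filter, Finset.sum_const, nsmul_eq_mul]
    rfl
  have hD : ∑ i, G.utility f (G.deviate a i (o i)) i = ∑ r, G.v r *
      (x r * f (G.count a r) + ((G.count o r : ℝ) - x r) * f (G.count a r + 1)) := by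
    simp only [RAGame.utility_update]
    rw [Finset.sum_comm]
    refine Finset.sum_congr rfl fun r _ => ?_
    rw [← Finset.mul_sum]
    congr 1
    have hc : (G.count o r : ℝ) = ∑ i, if r ∈ (o i).val then (1 : ℝ) else 0 := by
      simp [RAGame.count]
    have hx : (x r : ℝ) = ∑ i, if r ∈ (a i).val ∧ r ∈ (o i).val then (1 : ℝ) else 0 := by
      simp [hxdef]
    rw [hc, hx, ← Finset.sum_sub_distrib, Finset.sum_mul, Finset.sum_mul,
      ← Finset.sum_add_distrib]
    refine Finset.sum_congr rfl fun i _ => ?_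
    split_ifs <;> simp_all
  have hN : ∑ i, G.utility f (G.deviate a i (o i)) i ≤ ∑ i, G.utility f a i :=
    Finset.sum_le_sum fun i _ => ha i (o i)
  rw [hU, hD, ← sub_nonneg, ← Finset.sum_sub_distrib] at hN
  have hN' := mul_nonneg hlam hN
  rw [Finset.mul_sum] at hN'
  rw [G.welfare_eq_sum hw0, G.welfare_eq_sum hw0, Finset.mul_sum]
  suffices hs : ∑ r, G.v r * w (G.count o r) + ∑ r, lam * (G.v r *
      (G.count a r * f (G.count a r)) - G.v r * (x r * f (G.count a r) +
      ((G.count o r : ℝ) - x r) * f (G.count a r + 1))) ≤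
      ∑ r, mu * (G.v r * w (G.count a r)) by linarith
  rw [← Finset.sum_add_distrib]
  refine Finset.sum_le_sum fun r _ => ?_
  have h1 := h _ _ (G.count_le a r) (G.count_le o r)
  have h2 := mul_le_mul_of_nonneg_left
    (overlap_le_lamCoeff hmono (G.count_le a r) (hxa r) (hxo r) (hsum r)) hlam
  have h3 := mul_nonneg (G.v_nonneg r) (sub_nonneg.2 ((add_le_add_right h2 _).trans h1))
  nlinarith [h3]

/-! ### Games from dual multipliers -/

/-- Farkas' lemma in one nonnegative variable; a certificate of infeasibility needs only two
constraints. -/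
lemma farkas_one {T : Type*} [Finite T] [Nonempty T] (A c : T → ℝ)
    (h : ¬ ∃ lam : ℝ, 0 ≤ lam ∧ ∀ t, A t + lam * c t ≤ 0) :
    ∃ (s t : T) (α β : ℝ), 0 ≤ α ∧ 0 ≤ β ∧ 0 ≤ α * c s + β * c t ∧ 0 < α * A s + β * A t := by
  by_contra! hc
  apply h
  have hpos : ∀ t, 0 ≤ c t → A t ≤ 0 := by
    intro t ht
    have := hc t t 1 0 zero_le_one le_rfl (by linarith)
    linarith
  -- The largest lower bound on `λ` coming from the constraints with `c t < 0`, or `0`.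
  obtain ⟨s, hs⟩ := Finite.exists_max fun t => if c t < 0 then max 0 (A t / -c t) else 0
  refine ⟨if c s < 0 then max 0 (A s / -c s) else 0, by split_ifs <;> simp, fun t => ?_⟩
  rcases lt_or_ge (c t) 0 with ht | ht
  · have h1 := hs t
    rw [if_pos ht] at h1
    have h2 := (div_le_iff₀ (neg_pos.2 ht)).1 ((le_max_right _ _).trans h1)
    linarith
  · have hA := hpos t ht
    split_ifs with hcs
    · rcases le_total (A s / -c s) 0 with h0 | h0
      · rw [max_eq_left h0]; linarith
      · rw [max_eq_right h0]
        have h1 := hc s t (c t) (-c s) ht (by linarith) (by linarith)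
        have h2 : 0 < -c s := by linarith
        have h3 : A t + A s / -c s * c t = (c t * A s + -c s * A t) / -c s := by
          rw [eq_div_iff h2.ne', add_mul, mul_right_comm, div_mul_cancel₀ _ h2.ne']
          ring
        rw [h3]
        exact div_nonpos_of_nonpos_of_nonneg h1 h2.le
    · linarith

lemma sum_fin_lt {n j : ℕ} (hj : j ≤ n) (c : ℝ) :
    ∑ p : Fin n, (if p.val < j then c else 0) = j * c := by
  rw [Fin.sum_univ_eq_sum_range (fun p => if p < j then c else 0) n, ← Finset.sum_filter,
    Finset.sum_const, nsmul_eq_mul]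
  have : (Finset.range n).filter (· < j) = Finset.range j := by
    ext; simp; omega
  rw [this, Finset.card_range]

lemma sum_fin_ge {n l : ℕ} (hl : l ≤ n) (c : ℝ) :
    ∑ p : Fin n, (if n ≤ p.val + l then c else 0) = l * c := by
  rw [Fin.sum_univ_eq_sum_range (fun p => if n ≤ p + l then c else 0) n, ← Finset.sum_filter,
    Finset.sum_const, nsmul_eq_mul]
  have : (Finset.range n).filter (fun p => n ≤ p + l) = Finset.Ico (n - l) n := by
    ext; simp; omega
  rw [this, Nat.card_Ico, Nat.sub_sub_self hl]

lemma sum_fin_both {n j l : ℕ} (hj : j ≤ n) (hl : l ≤ n) (c : ℝ) :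
    ∑ p : Fin n, (if n ≤ p.val + l ∧ p.val < j then c else 0) = (j + l - n : ℕ) * c := by
  rw [Fin.sum_univ_eq_sum_range (fun p => if n ≤ p + l ∧ p < j then c else 0) n,
    ← Finset.sum_filter, Finset.sum_const, nsmul_eq_mul]
  have : (Finset.range n).filter (fun p => n ≤ p + l ∧ p < j) = Finset.Ico (n - l) j := by
    ext; simp; omega
  rw [this, Nat.card_Ico]
  congr 2
  omega

/-- The rotation-invariant game attached to pairs `(J t, L t)` and weights `θ t`. Each index `t`
yields `n` resources of value `θ t`, one for each rotation `k`; agent `i` sits at position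
`i - k` (mod `n`) of the resource `(t, k)`. An agent chooses between the resources where its
position is among the first `J t` (equilibrium) and those where it is among the last `L t`
(optimum). The two groups of agents overlap in `J t + L t - n` (truncated) positions. -/
abbrev cyclicGame (n : ℕ) [NeZero n] {ι : Type} [Fintype ι] [DecidableEq ι] (J L : ι → ℕ)
    (θ : ι → ℝ) (hθ : ∀ t, 0 ≤ θ t) : RAGame n where
  R := ι × Fin n
  v r := θ r.1
  v_nonneg r := hθ r.1
  m := n
  m_le := le_rfl
  A i := {Finset.univ.filter (fun r : ι × Fin n => (i - r.2).val < J r.1),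
    Finset.univ.filter (fun r : ι × Fin n => n ≤ (i - r.2).val + L r.1)}
  A_ne i := by simp

section cyclicGame

variable {n : ℕ} [NeZero n] {ι : Type} [Fintype ι] [DecidableEq ι] {J L : ι → ℕ}
  {θ : ι → ℝ} {hθ : ∀ t, 0 ≤ θ t}

/-- The allocation of `cyclicGame` in which all agents take their first choice. -/
def cyclicEq : (cyclicGame n J L θ hθ).Alloc := fun i =>
  ⟨Finset.univ.filter (fun r : ι × Fin n => (i - r.2).val < J r.1),
    Finset.mem_insert_self _ _⟩

/-- The allocation of `cyclicGame` in which all agents take their second choice. -/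
def cyclicOpt : (cyclicGame n J L θ hθ).Alloc := fun i =>
  ⟨Finset.univ.filter (fun r : ι × Fin n => n ≤ (i - r.2).val + L r.1),
    Finset.mem_insert_of_mem (Finset.mem_singleton_self _)⟩

lemma mem_cyclicEq (i : Fin n) (r : ι × Fin n) :
    r ∈ ((cyclicEq (hθ := hθ) (J := J) (L := L)) i).val ↔ (i - r.2).val < J r.1 := by
  simp [cyclicEq]

lemma mem_cyclicOpt (i : Fin n) (r : ι × Fin n) :
    r ∈ ((cyclicOpt (hθ := hθ) (J := J) (L := L)) i).val ↔ n ≤ (i - r.2).val + L r.1 := by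
  simp [cyclicOpt]

lemma count_cyclicEq (hJ : ∀ t, J t ≤ n) (r : ι × Fin n) :
    (cyclicGame n J L θ hθ).count cyclicEq r = J r.1 := by
  have h : ((cyclicGame n J L θ hθ).count cyclicEq r : ℝ) =
      ∑ i : Fin n, (if (i - r.2).val < J r.1 then (1 : ℝ) else 0) := by
    unfold RAGame.count
    rw [Finset.card_filter]
    push_cast
    exact Finset.sum_congr rfl fun i _ => if_congr (mem_cyclicEq i r) rfl rfl
  have h' := (Equiv.subRight r.2).sum_comp
    (fun p : Fin n => if p.val < J r.1 then (1 : ℝ) else 0)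
  rw [sum_fin_lt (hJ _), mul_one] at h'
  replace h := h.trans h'
  exact_mod_cast h

lemma count_cyclicOpt (hL : ∀ t, L t ≤ n) (r : ι × Fin n) :
    (cyclicGame n J L θ hθ).count cyclicOpt r = L r.1 := by
  have h : ((cyclicGame n J L θ hθ).count cyclicOpt r : ℝ) =
      ∑ i : Fin n, (if n ≤ (i - r.2).val + L r.1 then (1 : ℝ) else 0) := by
    unfold RAGame.count
    rw [Finset.card_filter]
    push_cast
    exact Finset.sum_congr rfl fun i _ => if_congr (mem_cyclicOpt i r) rfl rfl
  have h' := (Equiv.subRight r.2).sum_comp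
    (fun p : Fin n => if n ≤ p.val + L r.1 then (1 : ℝ) else 0)
  rw [sum_fin_ge (hL _), mul_one] at h'
  replace h := h.trans h'
  exact_mod_cast h

lemma welfare_cyclicEq {w : ℕ → ℝ} (hw0 : w 0 = 0) (hJ : ∀ t, J t ≤ n) :
    (cyclicGame n J L θ hθ).welfare w cyclicEq = n * ∑ t, θ t * w (J t) := by
  rw [RAGame.welfare_eq_sum _ hw0]
  have h : ∀ r : ι × Fin n, (cyclicGame n J L θ hθ).v r *
      w ((cyclicGame n J L θ hθ).count cyclicEq r) = θ r.1 * w (J r.1) := by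
    intro r; rw [count_cyclicEq hJ]
  refine (Finset.sum_congr rfl fun r _ => h r).trans ?_
  refine (Fintype.sum_prod_type (fun r : ι × Fin n => θ r.1 * w (J r.1))).trans ?_
  simp [Finset.mul_sum]

lemma welfare_cyclicOpt {w : ℕ → ℝ} (hw0 : w 0 = 0) (hL : ∀ t, L t ≤ n) :
    (cyclicGame n J L θ hθ).welfare w cyclicOpt = n * ∑ t, θ t * w (L t) := by
  rw [RAGame.welfare_eq_sum _ hw0]
  have h : ∀ r : ι × Fin n, (cyclicGame n J L θ hθ).v r *
      w ((cyclicGame n J L θ hθ).count cyclicOpt r) = θ r.1 * w (L r.1) := by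
    intro r; rw [count_cyclicOpt hL]
  refine (Finset.sum_congr rfl fun r _ => h r).trans ?_
  refine (Fintype.sum_prod_type (fun r : ι × Fin n => θ r.1 * w (L r.1))).trans ?_
  simp [Finset.mul_sum]

/-- By rotation invariance every agent gains the same `-Σ_t θ_t · lamCoeff (J t) (L t)` by
deviating, so the sign of this sum decides whether `cyclicEq` is an equilibrium. -/
lemma isNash_cyclicEq {f : ℕ → ℝ} (hJ : ∀ t, J t ≤ n) (hL : ∀ t, L t ≤ n)
    (hc : 0 ≤ ∑ t, θ t * lamCoeff f n (J t) (L t)) :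
    (cyclicGame n J L θ hθ).IsNash f cyclicEq := by
  rw [RAGame.isNash_iff]
  intro i s
  obtain ⟨s, hs⟩ := s
  rcases Finset.mem_insert.1 hs with hs' | hs'
  · have : (⟨s, hs⟩ : {s // s ∈ (cyclicGame n J L θ hθ).A i}) = cyclicEq i := Subtype.ext hs'
    rw [this, RAGame.deviate_eq_self]
  · have : (⟨s, hs⟩ : {s // s ∈ (cyclicGame n J L θ hθ).A i}) = cyclicOpt i :=
      Subtype.ext (Finset.mem_singleton.1 hs')
    rw [this, RAGame.utility_update, RAGame.utility_eq_sum]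
    have hU : ∑ r, (cyclicGame n J L θ hθ).v r * (if r ∈ (cyclicEq (hθ := hθ) (J := J) (L := L)
        i).val then f ((cyclicGame n J L θ hθ).count cyclicEq r) else 0) =
        ∑ t, θ t * (J t * f (J t)) := by
      have h : ∀ r : ι × Fin n, (cyclicGame n J L θ hθ).v r *
          (if r ∈ (cyclicEq (hθ := hθ) (J := J) (L := L) i).val then
            f ((cyclicGame n J L θ hθ).count cyclicEq r) else 0) =
          θ r.1 * if (Equiv.subLeft i r.2).val < J r.1 then f (J r.1) else 0 := by
        intro r
        rw [count_cyclicEq hJ]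
        exact congrArg _ (if_congr (mem_cyclicEq i r) rfl rfl)
      refine (Finset.sum_congr rfl fun r _ => h r).trans ?_
      refine (Fintype.sum_prod_type (fun r : ι × Fin n => θ r.1 *
        if (Equiv.subLeft i r.2).val < J r.1 then f (J r.1) else 0)).trans ?_
      refine Finset.sum_congr rfl fun t _ => ?_
      dsimp only
      rw [← Finset.mul_sum, (Equiv.subLeft i).sum_comp
        (fun p : Fin n => if p.val < J t then f (J t) else 0), sum_fin_lt (hJ t)]
    have hD : ∑ r, (cyclicGame n J L θ hθ).v r *
        (if r ∈ (cyclicOpt (hθ := hθ) (J := J) (L := L) i).val then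
          (if r ∈ (cyclicEq (hθ := hθ) (J := J) (L := L) i).val then
            f ((cyclicGame n J L θ hθ).count cyclicEq r)
            else f ((cyclicGame n J L θ hθ).count cyclicEq r + 1)) else 0) =
        ∑ t, θ t * ((J t + L t - n : ℕ) * f (J t) +
          (L t - (J t + L t - n : ℕ)) * f (J t + 1)) := by
      have h : ∀ r : ι × Fin n, (cyclicGame n J L θ hθ).v r *
          (if r ∈ (cyclicOpt (hθ := hθ) (J := J) (L := L) i).val then
            (if r ∈ (cyclicEq (hθ := hθ) (J := J) (L := L) i).val then
              f ((cyclicGame n J L θ hθ).count cyclicEq r)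
              else f ((cyclicGame n J L θ hθ).count cyclicEq r + 1)) else 0) =
          θ r.1 * if n ≤ (Equiv.subLeft i r.2).val + L r.1 then
            (if (Equiv.subLeft i r.2).val < J r.1 then f (J r.1) else f (J r.1 + 1)) else 0 := by
        intro r
        rw [count_cyclicEq hJ]
        exact congrArg _ (if_congr (mem_cyclicOpt i r)
          (if_congr (mem_cyclicEq i r) rfl rfl) rfl)
      refine (Finset.sum_congr rfl fun r _ => h r).trans ?_
      refine (Fintype.sum_prod_type (fun r : ι × Fin n => θ r.1 *
        if n ≤ (Equiv.subLeft i r.2).val + L r.1 then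
          (if (Equiv.subLeft i r.2).val < J r.1 then f (J r.1) else f (J r.1 + 1))
          else 0)).trans ?_
      refine Finset.sum_congr rfl fun t _ => ?_
      dsimp only
      rw [← Finset.mul_sum, (Equiv.subLeft i).sum_comp
        (fun p : Fin n => if n ≤ p.val + L t then
          (if p.val < J t then f (J t) else f (J t + 1)) else 0)]
      have h1 := sum_fin_both (hJ t) (hL t) (f (J t))
      have h2 := sum_fin_both (hJ t) (hL t) (f (J t + 1))
      have h3 := sum_fin_ge (hL t) (f (J t + 1))
      rw [sub_mul, ← h1, ← h2, ← h3, ← Finset.sum_sub_distrib, ← Finset.sum_add_distrib]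
      congr 1
      refine Finset.sum_congr rfl fun p _ => ?_
      split_ifs <;> simp_all
    rw [← sub_nonneg]
    refine hc.trans_eq ?_
    refine Eq.trans ?_ (congrArg₂ (· - ·) hU hD).symm
    rw [← Finset.sum_sub_distrib]
    refine Finset.sum_congr rfl fun t _ => ?_
    unfold lamCoeff
    ring

end cyclicGame

/-- If no `λ` makes `μ > 0` feasible, some game has price of anarchy at most `1/μ`. -/
lemma exists_bad_game {n : ℕ} {w f : ℕ → ℝ} (hn : 1 ≤ n)
    (hw : ∀ j, 1 ≤ j → j ≤ n → 0 < w j) (hw0 : w 0 = 0) {mu : ℝ} (hmu : 0 < mu)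
    (h : ¬ ∃ lam, ReducedFeasible f w n lam mu) :
    ∃ G : RAGame n, 0 < G.optVal w ∧ G.worstNash f w / G.optVal w ≤ 1 / mu := by
  have : NeZero n := ⟨by omega⟩
  have hwn : ∀ j, j ≤ n → 0 ≤ w j := by
    intro j hj
    rcases Nat.eq_zero_or_pos j with rfl | h
    · exact hw0.ge
    · exact (hw j h hj).le
  obtain ⟨s, t, α, β, hα, hβ, hc, hA⟩ := farkas_one
    (T := Fin (n + 1) × Fin (n + 1)) (fun p => w p.2 - mu * w p.1)
    (fun p => lamCoeff f n p.1 p.2) (by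
      rintro ⟨lam, hlam, hall⟩
      refine h ⟨lam, (reducedFeasible_iff hw0 _ _).2 ⟨hlam, fun j l hj hl => ?_⟩⟩
      exact hall (⟨j, by omega⟩, ⟨l, by omega⟩))
  let J : Fin 2 → ℕ := ![s.1, t.1]
  let L : Fin 2 → ℕ := ![s.2, t.2]
  let θ : Fin 2 → ℝ := ![α, β]
  have hθ : ∀ k, 0 ≤ θ k := by
    intro k; fin_cases k <;> simpa [θ]
  have hJ : ∀ k, J k ≤ n := by
    intro k; fin_cases k <;> simp [J] <;> omega
  have hL : ∀ k, L k ≤ n := by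
    intro k; fin_cases k <;> simp [L] <;> omega
  have hnash : (cyclicGame n J L θ hθ).IsNash f cyclicEq :=
    isNash_cyclicEq hJ hL (by simpa [Fin.sum_univ_two, J, L, θ] using hc)
  have hE := welfare_cyclicEq (hθ := hθ) (L := L) hw0 hJ
  have hO := welfare_cyclicOpt (hθ := hθ) (J := J) hw0 hL
  have hlt : mu * (cyclicGame n J L θ hθ).welfare w cyclicEq <
      (cyclicGame n J L θ hθ).welfare w cyclicOpt := by
    rw [hE, hO]
    simp only [Fin.sum_univ_two, J, L, θ, Matrix.cons_val_zero, Matrix.cons_val_one]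
    have : (0 : ℝ) < n := by exact_mod_cast hn
    nlinarith [mul_pos this hA]
  have hE0 : 0 ≤ (cyclicGame n J L θ hθ).welfare w cyclicEq := by
    rw [hE]
    exact mul_nonneg (Nat.cast_nonneg n)
      (Finset.sum_nonneg fun k _ => mul_nonneg (hθ k) (hwn _ (hJ k)))
  have hlt' := hlt.trans_le ((cyclicGame n J L θ hθ).le_optVal w cyclicOpt)
  have hpos : 0 < (cyclicGame n J L θ hθ).optVal w :=
    (mul_nonneg hmu.le hE0).trans_lt hlt'
  refine ⟨cyclicGame n J L θ hθ, hpos, ?_⟩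
  rw [div_le_div_iff₀ hpos hmu]
  have := mul_le_mul_of_nonneg_left ((cyclicGame n J L θ hθ).worstNash_le f w hnash) hmu.le
  linarith

/-! ### Attainment of the minimum -/

lemma one_le_of_feasible {n : ℕ} {w f : ℕ → ℝ} (hn : 1 ≤ n)
    (hw : ∀ j, 1 ≤ j → j ≤ n → 0 < w j) (hw0 : w 0 = 0)
    (hmono : ∀ j, 1 ≤ j → j + 1 ≤ n → f (j + 1) ≤ f j) {lam mu : ℝ}
    (h : ReducedFeasible f w n lam mu) : 1 ≤ mu := by
  obtain ⟨hlam, h⟩ := (reducedFeasible_iff hw0 _ _).1 h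
  have h1 := h 1 1 hn hn
  -- The pair `(1, 1)` with full overlap has coefficient `0`.
  have h2 := overlap_le_lamCoeff hmono (j := 1) (l := 1) (x := 1) hn le_rfl le_rfl (by omega)
  have h3 : 0 ≤ lamCoeff f n 1 1 := by simpa using h2
  have h4 := mul_nonneg hlam h3
  have h5 := hw 1 le_rfl hn
  by_contra! hlt
  nlinarith

lemma exists_feasible {n : ℕ} {w f : ℕ → ℝ}
    (hw : ∀ j, 1 ≤ j → j ≤ n → 0 < w j) (hw0 : w 0 = 0) (hf1 : 0 < f 1) :
    ∃ lam mu, ReducedFeasible f w n lam mu := by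
  -- `λ` is chosen to satisfy the constraints with `j = 0`, then `μ` to satisfy the others.
  obtain ⟨C, hC⟩ := ((Finset.range (n + 1)).image fun l => w l).bddAbove
  have hC' : ∀ l ≤ n, w l ≤ C := fun l hl =>
    hC (Finset.mem_coe.2 (Finset.mem_image_of_mem (fun l => w l)
      (Finset.mem_range.2 (by omega))))
  have hC0 : 0 ≤ C := hw0 ▸ hC' 0 (Nat.zero_le _)
  obtain ⟨D, hD⟩ := (((Finset.range (n + 1)) ×ˢ (Finset.range (n + 1))).image fun p =>
    (w p.2 + C / f 1 * lamCoeff f n p.1 p.2) / w p.1).bddAbove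
  refine ⟨C / f 1, D, (reducedFeasible_iff hw0 _ _).2 ⟨by positivity, fun j l hj hl => ?_⟩⟩
  rcases Nat.eq_zero_or_pos j with rfl | hjpos
  · have hx : 0 + l - n = 0 := by omega
    have hco : C / f 1 * lamCoeff f n 0 l = -(C * l) := by
      simp only [lamCoeff, hx]
      push_cast
      field_simp
      simp [mul_assoc]
    rw [hco, hw0]
    rcases Nat.eq_zero_or_pos l with rfl | hl0
    · simp [hw0]
    · have h1 : (1 : ℝ) ≤ l := by exact_mod_cast hl0
      nlinarith [hC' l hl]
  · have h1 := hD (Finset.mem_coe.2 (Finset.mem_image_of_mem (fun p : ℕ × ℕ =>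
      (w p.2 + C / f 1 * lamCoeff f n p.1 p.2) / w p.1) (Finset.mem_product.2
      (show (j, l).1 ∈ _ ∧ (j, l).2 ∈ _ from
        ⟨Finset.mem_range.2 (by omega), Finset.mem_range.2 (by omega)⟩))))
    have h2 := (div_le_iff₀ (hw j hjpos hj)).1 h1
    simp only at h2
    linarith

lemma isClosed_feasible {n : ℕ} {w f : ℕ → ℝ} (hw0 : w 0 = 0) :
    IsClosed {p : ℝ × ℝ | ReducedFeasible f w n p.1 p.2} := by
  simp only [reducedFeasible_iff hw0, Set.ofPred_and, Set.ofPred_forall]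
  refine (isClosed_le continuous_const continuous_fst).inter ?_
  refine isClosed_iInter fun j => isClosed_iInter fun l => isClosed_iInter fun _ =>
    isClosed_iInter fun _ => isClosed_le (by fun_prop) continuous_const

/-- The minimum of the reduced program is attained: the constraint of the pair `(1, 0)` bounds
`λ` in terms of `μ`, so that sublevel sets of `μ` are compact. -/
lemma exists_minimizer {n : ℕ} {w f : ℕ → ℝ} (hn : 1 ≤ n)
    (hw : ∀ j, 1 ≤ j → j ≤ n → 0 < w j) (hw0 : w 0 = 0) (hf1 : 0 < f 1)
    (hmono : ∀ j, 1 ≤ j → j + 1 ≤ n → f (j + 1) ≤ f j) :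
    ∃ lam mu, ReducedFeasible f w n lam mu ∧
      ∀ lam' mu', ReducedFeasible f w n lam' mu' → mu ≤ mu' := by
  obtain ⟨lam₀, mu₀, h₀⟩ := exists_feasible (n := n) hw hw0 hf1
  have hmem : ∀ lam mu, ReducedFeasible f w n lam mu → mu ≤ mu₀ →
      (lam, mu) ∈ Set.Icc (0 : ℝ) (mu₀ * w 1 / f 1) ×ˢ Set.Icc (1 : ℝ) mu₀ := by
    intro lam mu h hle
    refine ⟨⟨h.1, ?_⟩, one_le_of_feasible hn hw hw0 hmono h, hle⟩
    have h1 := h.2.1 1 0 hn (Nat.zero_le _) (by norm_num) (by omega)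
    rw [hw0] at h1
    have h2 := mul_le_mul_of_nonneg_right hle (hw 1 le_rfl hn).le
    rw [le_div_iff₀ hf1]
    push_cast at h1
    linarith
  obtain ⟨⟨lam, mu⟩, ⟨h, _⟩, hmin⟩ := IsCompact.exists_isMinOn
    ((isCompact_Icc.prod isCompact_Icc).inter_left (isClosed_feasible (f := f) (n := n) hw0))
    ⟨(lam₀, mu₀), h₀, hmem _ _ h₀ le_rfl⟩ continuous_snd.continuousOn
  refine ⟨lam, mu, h, fun lam' mu' h' => ?_⟩
  rcases le_total mu' mu₀ with hle | hle
  · exact hmin ⟨h', hmem _ _ h' hle⟩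
  · exact (hmin ⟨h₀, hmem _ _ h₀ le_rfl⟩ : mu ≤ mu₀).trans hle

/-- Corollary 1(i): for non-increasing `f` with `f(1) > 0`, the price of anarchy
equals `1/W*` with `W*` the minimum of `μ` over the reduced dual program (8);
moreover the minimum is attained. -/
theorem poa_reduced_dual_lp (n : ℕ) (w f : ℕ → ℝ) (hn : 1 ≤ n)
    (hw : ∀ j, 1 ≤ j → j ≤ n → 0 < w j)
    (hw0 : w 0 = 0) (hwn1 : w (n + 1) = 0)
    (hf0 : f 0 = 0) (hfn1 : f (n + 1) = 0)
    (hf1 : 0 < f 1)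
    (hmono : ∀ j, 1 ≤ j → j + 1 ≤ n → f (j + 1) ≤ f j) :
    (∃ lam : ℝ, ReducedFeasible f w n lam
        (sInf { mu : ℝ | ∃ lam' : ℝ, ReducedFeasible f w n lam' mu })) ∧
    PoA f w n = 1 / sInf { mu : ℝ | ∃ lam : ℝ, ReducedFeasible f w n lam mu } := by
  obtain ⟨lam, W, hW, hmin⟩ := exists_minimizer hn hw hw0 hf1 hmono
  have hInf : sInf { mu : ℝ | ∃ lam : ℝ, ReducedFeasible f w n lam mu } = W :=
    IsLeast.csInf_eq ⟨⟨lam, hW⟩, fun mu ⟨lam', h⟩ => hmin lam' mu h⟩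
  rw [hInf]
  refine ⟨⟨lam, hW⟩, ?_⟩
  have hW1 : 1 ≤ W := one_le_of_feasible hn hw hw0 hmono hW
  have hWpos : 0 < W := by linarith
  have hlower : ∀ x ∈ { x : ℝ | ∃ G : RAGame n, 0 < G.optVal w ∧
      x = G.worstNash f w / G.optVal w }, 1 / W ≤ x := by
    rintro _ ⟨G, hG, rfl⟩
    rw [div_le_div_iff₀ hWpos hG, one_mul, ← div_le_iff₀ hWpos]
    obtain ⟨a, ha⟩ := G.exists_isNash f
    refine le_csInf ⟨_, a, ha, rfl⟩ ?_
    rintro _ ⟨a, ha, rfl⟩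
    rw [div_le_iff₀ hWpos, mul_comm]
    obtain ⟨a₀⟩ : Nonempty G.Alloc := inferInstance
    refine csSup_le ⟨_, a₀, rfl⟩ ?_
    rintro _ ⟨o, rfl⟩
    exact G.welfare_le_of_feasible hw0 hmono hW ha o
  have hupper : ∀ mu, 0 < mu → mu < W → ∃ G : RAGame n, 0 < G.optVal w ∧
      G.worstNash f w / G.optVal w ≤ 1 / mu := fun mu h0 hlt =>
    exists_bad_game hn hw hw0 h0 fun ⟨lam', h⟩ => (hmin lam' mu h).not_gt hlt
  unfold PoA
  apply le_antisymm
  · have hle : ∀ mu, 0 < mu → mu < W → sInf { x : ℝ | ∃ G : RAGame n, 0 < G.optVal w ∧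
        x = G.worstNash f w / G.optVal w } * mu ≤ 1 := by
      intro mu h0 hlt
      obtain ⟨G, hG, hle⟩ := hupper mu h0 hlt
      rw [← le_div_iff₀ h0]
      exact (csInf_le ⟨_, hlower⟩ ⟨G, hG, rfl⟩).trans hle
    rw [le_div_iff₀ hWpos]
    -- The bound for `μ < W` passes to the limit `μ → W`.
    refine le_of_tendsto (x := nhdsWithin W (Set.Iio W))
      ((continuous_const_mul _).tendsto W |>.mono_left nhdsWithin_le_nhds) ?_
    filter_upwards [Ioo_mem_nhdsLT hWpos] with mu hmu
    exact hle mu hmu.1 hmu.2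
  · obtain ⟨G, hG, _⟩ := hupper (W / 2) (by linarith) (by linarith)
    exact le_csInf ⟨_, G, hG, rfl⟩ hlower
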